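/- arXiv:2308.11694 — 2 statements merged into one kernel-verified Lean document; each statement's English description precedes it below -/
import Mathlib

section
/- For every integer N ≥ 402 there exists a prime number p not dividing N such that (p−1)·ψ(N)/12 + 2^{ω(N)} > 4·(p+1)², where ψ(N) = N·∏_{q prime, q ∣ N}(1 + 1/q) and ω(N) is the number of distinct prime divisors of N. (This is the arithmetic inequality, violating Ogg's bound 4(p+1)² ≥ L_p(N) for tetraelliptic curves, which shows that X_0(N) is not tetraelliptic for all N ≥ 402.) -/
open Finset

/-- Dropping factors `1 + 1/q ≥ 1` from the product gives a lower bound for `ψ(N)`. -/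
lemma psi_ge (N : ℕ) (hN : N ≠ 0) (S : Finset ℕ) (hS : ∀ q ∈ S, q.Prime ∧ q ∣ N) :
    (N : ℚ) * ∏ q ∈ S, (1 + 1 / (q : ℚ)) ≤
      (N : ℚ) * ∏ q ∈ N.primeFactors, (1 + 1 / (q : ℚ)) := by
  apply mul_le_mul_of_nonneg_left _ (by positivity)
  have hsub : S ⊆ N.primeFactors := fun q hq =>
    Nat.mem_primeFactors.2 ⟨(hS q hq).1, (hS q hq).2, hN⟩
  have hf : ∀ q : ℕ, (1 : ℚ) ≤ 1 + 1 / (q : ℚ) := by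
    intro q
    have : (0 : ℚ) ≤ 1 / (q : ℚ) := by positivity
    linarith
  rw [← Finset.prod_sdiff hsub]
  apply le_mul_of_one_le_left
  · exact Finset.prod_nonneg fun q _ => by positivity
  · exact Finset.one_le_prod fun q _ => hf q

/-- If `2, 3, 5, 7, 11, 13 ∣ N`, the least prime `p` not dividing `N` is small
compared with `N`. -/
lemma exists_prime_large (N : ℕ) (hN : N ≠ 0) (h2 : 2 ∣ N) (h3 : 3 ∣ N) (h5 : 5 ∣ N)
    (h7 : 7 ∣ N) (h11 : 11 ∣ N) (h13 : 13 ∣ N) :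
    ∃ p : ℕ, p.Prime ∧ ¬ p ∣ N ∧ 17 ≤ p ∧ 105 * p ≤ N := by
  have h210 : 210 ∣ N := by
    have h6 : 2 * 3 ∣ N := Nat.Coprime.mul_dvd_of_dvd_of_dvd (by norm_num) h2 h3
    have h30 : 2 * 3 * 5 ∣ N := Nat.Coprime.mul_dvd_of_dvd_of_dvd (by norm_num) h6 h5
    exact Nat.Coprime.mul_dvd_of_dvd_of_dvd (m := 2 * 3 * 5) (n := 7) (by norm_num) h30 h7
  have hsmall : ∀ p : ℕ, p.Prime → p < 17 → p ∣ N := by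
    intro p hp hlt
    interval_cases p <;> first | assumption | (revert hp; norm_num)
  clear h2 h3 h5 h7 h11 h13
  have hpos : 0 < N := Nat.pos_of_ne_zero hN
  have hex : ∃ p : ℕ, p.Prime ∧ ¬ p ∣ N := by
    obtain ⟨p, hp, hpp⟩ := Nat.exists_infinite_primes (N + 1)
    exact ⟨p, hpp, fun hd => by have := Nat.le_of_dvd hpos hd; omega⟩
  classical
  have hs := Nat.find_spec hex
  have hm : ∀ m, m < Nat.find hex → m.Prime → m ∣ N := by
    intro m hm hmp
    by_contra hd
    exact Nat.find_min hex hm ⟨hmp, hd⟩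
  generalize Nat.find hex = p at hs hm
  obtain ⟨hp, hpN⟩ := hs
  have h17 : 17 ≤ p := by
    by_contra hlt
    exact hpN (hsmall p hp (by omega))
  have hodd : p % 2 = 1 := by
    rcases hp.eq_two_or_odd with h | h <;> omega
  obtain ⟨r, hr, hr1, hr2⟩ := Nat.exists_prime_lt_and_le_two_mul (p / 2) (by omega)
  have hrN : r ∣ N := hm r (by omega) hr
  have hcop : Nat.Coprime 210 r := by
    rw [Nat.coprime_comm, hr.coprime_iff_not_dvd]
    intro hd
    have hd' : r ∣ 2 * 3 * 5 * 7 := by simpa using hd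
    have := fun {a b : ℕ} => (hr.dvd_mul (m := a) (n := b)).1
    rcases this hd' with h | h
    · rcases this h with h | h
      · rcases this h with h | h
        · have := Nat.le_of_dvd (by norm_num) h; omega
        · have := Nat.le_of_dvd (by norm_num) h; omega
      · have := Nat.le_of_dvd (by norm_num) h; omega
    · have := Nat.le_of_dvd (by norm_num) h; omega
  have := Nat.le_of_dvd hpos (hcop.mul_dvd_of_dvd_of_dvd h210 hrN)
  exact ⟨p, hp, hpN, h17, by omega⟩

/-- For every integer `N ≥ 402` there exists a prime `p` not dividing `N` such that
`(p − 1) · ψ(N) / 12 + 2 ^ ω(N) > 4 · (p + 1)²`, where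
`ψ(N) = N · ∏_{q ∣ N prime} (1 + 1/q)` and `ω(N)` is the number of distinct prime
divisors of `N`. -/
theorem stmt2 (N : ℕ) (hN : 402 ≤ N) :
    ∃ p : ℕ, p.Prime ∧ ¬ p ∣ N ∧
      ((p : ℚ) - 1) * ((N : ℚ) * ∏ q ∈ N.primeFactors, (1 + 1 / (q : ℚ))) / 12
        + 2 ^ N.primeFactors.card > 4 * ((p : ℚ) + 1) ^ 2 := by
  have hN0 : N ≠ 0 := by omega
  have hge := psi_ge N hN0
  have hW : (2 : ℚ) ≤ 2 ^ N.primeFactors.card := by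
    have hc : N.primeFactors.card ≠ 0 := by
      rw [Finset.card_ne_zero]
      exact Nat.nonempty_primeFactors.2 (by omega)
    exact le_self_pow₀ (by norm_num) hc
  generalize (N : ℚ) * ∏ q ∈ N.primeFactors, (1 + 1 / (q : ℚ)) = Ψ at *
  generalize (2 : ℚ) ^ N.primeFactors.card = W at *
  have hNq : (402 : ℚ) ≤ N := by exact_mod_cast hN
  have hone : ∀ q : ℕ, q.Prime → q ∣ N → (N : ℚ) * (1 + 1 / (q : ℚ)) ≤ Ψ := by
    intro q hq hd
    have := hge {q} (by simp [hq, hd])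
    simpa using this
  have h0 : (N : ℚ) ≤ Ψ := by simpa using hge ∅ (by simp)
  by_cases h2 : 2 ∣ N
  swap
  · refine ⟨2, by norm_num, h2, ?_⟩
    rcases Nat.lt_or_ge N 409 with hlt | hge9
    · have hcases : N = 403 ∨ N = 405 ∨ N = 407 := by omega
      rcases hcases with rfl | rfl | rfl
      · have := hone 13 (by norm_num) (by norm_num)
        norm_num at this ⊢; linarith
      · have := hone 3 (by norm_num) (by norm_num)
        norm_num at this ⊢; linarith
      · have := hone 11 (by norm_num) (by norm_num)
        norm_num at this ⊢; linarith
    · have : (409 : ℚ) ≤ N := by exact_mod_cast hge9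
      norm_num; linarith
  have e2 := hone 2 (by norm_num) h2
  by_cases h3 : 3 ∣ N
  swap
  · refine ⟨3, by norm_num, h3, ?_⟩
    norm_num at e2 ⊢; linarith
  have e3 : (N : ℚ) * 2 ≤ Ψ := by
    have := hge {2, 3} (by simp [h2, h3, Nat.prime_two, Nat.prime_three])
    norm_num at this; exact this
  by_cases h5 : 5 ∣ N
  swap
  · refine ⟨5, by norm_num, h5, ?_⟩
    norm_num; linarith
  by_cases h7 : 7 ∣ N
  swap
  · refine ⟨7, by norm_num, h7, ?_⟩
    norm_num; linarith
  by_cases h11 : 11 ∣ N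
  swap
  · refine ⟨11, by norm_num, h11, ?_⟩
    norm_num; linarith
  by_cases h13 : 13 ∣ N
  swap
  · refine ⟨13, by norm_num, h13, ?_⟩
    norm_num; linarith
  obtain ⟨p, hp, hpN, h17, hle⟩ := exists_prime_large N hN0 h2 h3 h5 h7 h11 h13
  refine ⟨p, hp, hpN, ?_⟩
  have h17q : (17 : ℚ) ≤ p := by exact_mod_cast h17
  have hleq : (105 : ℚ) * p ≤ N := by exact_mod_cast hle
  have hmul : ((p : ℚ) - 1) * (105 * p) ≤ ((p : ℚ) - 1) * Ψ :=
    mul_le_mul_of_nonneg_left (by linarith) (by linarith)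
  nlinarith
end

section
/- For all integers x, y, z with (x, y, z) ≠ (0, 0, 0), one has 12x² + 12y² + 12z² − 16xy + 4xz − 16yz > 4. In particular, the equation 12x² + 12y² + 12z² − 16xy + 4xz − 16yz = 4 has no integer solutions. -/
/-- For all integers `x, y, z` with `(x, y, z) ≠ (0, 0, 0)` one has
`12x² + 12y² + 12z² − 16xy + 4xz − 16yz > 4`; in particular this form never takes
the value `4`. -/
theorem stmt4 :
    (∀ x y z : ℤ, (x, y, z) ≠ (0, 0, 0) →
      4 < 12 * x ^ 2 + 12 * y ^ 2 + 12 * z ^ 2 - 16 * x * y + 4 * x * z - 16 * y * z) ∧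
    (∀ x y z : ℤ,
      12 * x ^ 2 + 12 * y ^ 2 + 12 * z ^ 2 - 16 * x * y + 4 * x * z - 16 * y * z ≠ 4) := by
  have key : ∀ x y z : ℤ, (x, y, z) ≠ (0, 0, 0) →
      4 < 12 * x ^ 2 + 12 * y ^ 2 + 12 * z ^ 2 - 16 * x * y + 4 * x * z - 16 * y * z := by
    intro x y z h
    by_contra! hle
    have h1 : x ^ 2 - x * z + z ^ 2 ≤ 0 := by
      have : 5 * (x ^ 2 - x * z + z ^ 2) ≤ 3 := by
        nlinarith [sq_nonneg (3 * y - 2 * (x + z))]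
      omega
    have hx : x = 0 := by
      have : x ^ 2 = 0 := by nlinarith [sq_nonneg (2 * z - x), sq_nonneg x]
      exact pow_eq_zero_iff (two_ne_zero) |>.mp this
    have hz : z = 0 := by
      have : z ^ 2 = 0 := by nlinarith [sq_nonneg (2 * x - z), sq_nonneg z]
      exact pow_eq_zero_iff (two_ne_zero) |>.mp this
    subst hx hz
    have hy : y = 0 := by
      have h3 := sq_nonneg y
      have : y ^ 2 = 0 := by
        have : 12 * y ^ 2 ≤ 4 := by linarith
        omega
      exact pow_eq_zero_iff (two_ne_zero) |>.mp this
    exact h (by rw [hy])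
  refine ⟨key, fun x y z h4 => ?_⟩
  by_cases h : (x, y, z) = (0, 0, 0)
  · simp only [Prod.mk.injEq] at h
    obtain ⟨rfl, rfl, rfl⟩ := h
    norm_num at h4
  · exact absurd h4 (key x y z h).ne'
end
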